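/- Let Z_1,…,Z_n be independent random variables each distributed according to 𝒵, and let S_1, S_2, S_3, S_4 ⊆ {1,…,n} be sets such that every element of S_1 ∪ S_2 ∪ S_3 ∪ S_4 belongs to at least two of the four sets. Then E[ ∏_{r=1}^{4} ∏_{i∈S_r} Z_i ] ≥ 3^{(|S_1|+|S_2|+|S_3|+|S_4|)/2}. -/

import Mathlib

open MeasureTheory Finset

noncomputable section

/-- The distribution `𝒵` on `ℝ`: takes value `3` with probability `1/4` and value `-1`
with probability `3/4`. -/
def Zdist : Measure ℝ := (4⁻¹ : ENNReal) • Measure.dirac 3 + ((3 : ENNReal) / 4) • Measure.dirac (-1)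

/-!
Writing `k i` for the number of sets containing `i`, the integrand is `∏ i, z i ^ k i` and the
exponent on the left is `∑ i, k i / 2`, so by independence it suffices to compare the two sides
factor by factor: `3 ^ (k / 2) ≤ E[Z ^ k] = (3 ^ k + 3 * (-1) ^ k) / 4`. This is a quadratic
inequality in `√3 ^ k` which holds for every `k ≠ 1`, with equality for `k = 0` and `k = 2`.
-/

instance Zdist.instIsProbabilityMeasure : IsProbabilityMeasure Zdist where
  measure_univ := by
    have weights_add : (4⁻¹ : ENNReal) + 3 / 4 = 1 := by
      rw [← one_div, ENNReal.div_add_div_same, ENNReal.div_eq_one_iff] <;> norm_num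
    simpa [Zdist] using weights_add

lemma integral_Zdist {E : Type*} [NormedAddCommGroup E] [NormedSpace ℝ E] [CompleteSpace E]
    (f : ℝ → E) : ∫ x, f x ∂Zdist = (1 / 4 : ℝ) • f 3 + (3 / 4 : ℝ) • f (-1) := by
  have integrable_f (a : ℝ) : Integrable f (Measure.dirac a) :=
    integrable_dirac enorm_lt_top
  rw [Zdist, integral_add_measure ((integrable_f 3).smul_measure (by simp))
    ((integrable_f (-1)).smul_measure (ENNReal.div_ne_top (by simp) (by simp)))]
  simp [integral_smul_measure]

lemma four_mul_sqrt_three_pow_le {k : ℕ} (hk : k ≠ 1) :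
    4 * √3 ^ k ≤ (3 : ℝ) ^ k + 3 * (-1) ^ k := by
  have sq_sqrt_three : √3 ^ 2 = 3 := Real.sq_sqrt (by norm_num)
  obtain rfl | rfl | three_le : k = 0 ∨ k = 2 ∨ 3 ≤ k := by omega
  · norm_num
  · norm_num
  · have five_le : 5 ≤ √3 ^ k :=
      calc (5 : ℝ) ≤ √3 ^ 3 := by nlinarith [Real.sqrt_nonneg 3]
        _ ≤ √3 ^ k := pow_le_pow_right₀ (Real.one_le_sqrt.2 (by norm_num)) three_le
    have sq_eq : (√3 ^ k) ^ 2 = 3 ^ k := by rw [pow_right_comm, sq_sqrt_three]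
    have neg_one_le : (-1 : ℝ) ≤ (-1) ^ k := by
      obtain h | h := neg_one_pow_eq_or ℝ k <;> norm_num [h]
    nlinarith

lemma three_rpow_half_le_integral_pow_Zdist {k : ℕ} (hk : k ≠ 1) :
    (3 : ℝ) ^ ((k : ℝ) / 2) ≤ ∫ x, x ^ k ∂Zdist := by
  rw [integral_Zdist, Real.rpow_div_two_eq_sqrt _ (by norm_num), Real.rpow_natCast, smul_eq_mul,
    smul_eq_mul]
  linarith [four_mul_sqrt_three_pow_le hk]

section FiniteFamilies

variable {ι κ : Type*} [Fintype ι] [Fintype κ] [DecidableEq ι]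

lemma prod_prod_mem_eq_prod_pow_card {M : Type*} [CommMonoid M] (S : κ → Finset ι) (z : ι → M) :
    ∏ r, ∏ i ∈ S r, z i = ∏ i, z i ^ #{r | i ∈ S r} := by
  simp only [← prod_const]
  exact prod_comm' (by simp)

lemma sum_card_eq_sum_card_filter_mem (S : κ → Finset ι) :
    ∑ r, #(S r) = ∑ i, #{r | i ∈ S r} := by
  simpa [bipartiteAbove, bipartiteBelow] using
    sum_card_bipartiteAbove_eq_sum_card_bipartiteBelow (s := univ) (t := univ) fun r i ↦ i ∈ S r

theorem Zdist_product_lower_bound_general (S : κ → Finset ι) (hS : ∀ i, #{r | i ∈ S r} ≠ 1) :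
    (3 : ℝ) ^ (((∑ r, #(S r) : ℕ) : ℝ) / 2) ≤
      ∫ z, ∏ r, ∏ i ∈ S r, z i ∂(Measure.pi fun _ : ι ↦ Zdist) :=
  calc (3 : ℝ) ^ (((∑ r, #(S r) : ℕ) : ℝ) / 2)
      = ∏ i, (3 : ℝ) ^ ((#{r | i ∈ S r} : ℝ) / 2) := by
        rw [sum_card_eq_sum_card_filter_mem, Nat.cast_sum, sum_div,
          Real.rpow_sum_of_pos (by norm_num)]
    _ ≤ ∏ i, ∫ x, x ^ #{r | i ∈ S r} ∂Zdist :=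
        prod_le_prod (fun _ _ ↦ by positivity)
          fun i _ ↦ three_rpow_half_le_integral_pow_Zdist (hS i)
    _ = ∫ z, ∏ i, z i ^ #{r | i ∈ S r} ∂(Measure.pi fun _ : ι ↦ Zdist) :=
        (integral_fintype_prod_eq_prod fun i (x : ℝ) ↦ x ^ #{r | i ∈ S r}).symm
    _ = ∫ z, ∏ r, ∏ i ∈ S r, z i ∂(Measure.pi fun _ : ι ↦ Zdist) := by
        simp only [prod_prod_mem_eq_prod_pow_card]

end FiniteFamilies

/-- If every element of `S₁ ∪ S₂ ∪ S₃ ∪ S₄` belongs to at least two of the four sets, then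
`E[∏_{r=1}^4 ∏_{i∈S_r} Z_i] ≥ 3^{(|S₁|+|S₂|+|S₃|+|S₄|)/2}` for i.i.d. `𝒵` variables. -/
theorem Zdist_product_lower_bound (n : ℕ) (S₁ S₂ S₃ S₄ : Finset (Fin n))
    (h : ∀ i ∈ S₁ ∪ S₂ ∪ S₃ ∪ S₄,
      2 ≤ (if i ∈ S₁ then 1 else 0) + (if i ∈ S₂ then 1 else 0) +
          (if i ∈ S₃ then 1 else 0) + (if i ∈ S₄ then (1 : ℕ) else 0)) :
    (3 : ℝ) ^ (((S₁.card + S₂.card + S₃.card + S₄.card : ℕ) : ℝ) / 2) ≤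
      ∫ z, (∏ i ∈ S₁, z i) * (∏ i ∈ S₂, z i) * (∏ i ∈ S₃, z i) * (∏ i ∈ S₄, z i)
        ∂(Measure.pi fun _ : Fin n => Zdist) := by
  have card_ne_one (i : Fin n) : #{r | i ∈ ![S₁, S₂, S₃, S₄] r} ≠ 1 := by
    simp only [card_filter, Fin.sum_univ_four, Matrix.cons_val]
    grind
  simpa [Fin.sum_univ_four, Fin.prod_univ_four] using
    Zdist_product_lower_bound_general ![S₁, S₂, S₃, S₄] card_ne_one

end
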